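/- Let m ≥ 2 and p ≥ 2 be integers, and let M_i = {i + r·p : 0 ≤ r ≤ m−1} for 0 ≤ i ≤ p−1. In the circulant graph C(m,p): (1) any two distinct vertices u, v lying in the same set M_i satisfy d(u,v) = 2; (2) for any two vertices u, v in the same set M_i and any vertex z outside M_i, d(u,z) = d(v,z). -/

import Mathlib

/-!
Modulo `p` every jump is `-1` or `1`, and every residue class modulo `p` in `ℤ_{mp}` has the form
`{k + r·p : r < m}`. Hence `C(m,p)` is the preimage, under reduction modulo `p`, of the cycle on
`ℤ_p` (a single edge if `p = 2`), and `M_i` is the fibre over `i`: vertices of the same `M_i` have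
the same neighbours. Two such vertices are nonadjacent, but have a common neighbour. They are also
at the same distance from any third vertex, since the first edge of a walk starting at one of them
can be replaced by an edge starting at the other.
-/

/-- A permutation of the vertices is a graph automorphism if it preserves adjacency. -/
def IsGraphAut {V : Type*} (G : SimpleGraph V) (σ : Equiv.Perm V) : Prop :=
  ∀ u v : V, G.Adj (σ u) (σ v) ↔ G.Adj u v

/-- A labeling with `r` labels is distinguishing if no nontrivial automorphism preserves it. -/
def IsDistinguishing {V : Type*} (G : SimpleGraph V) {r : ℕ} (c : V → Fin r) : Prop :=
  ∀ σ : Equiv.Perm V, IsGraphAut G σ → (∀ v, c (σ v) = c v) → σ = Equiv.refl V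

/-- The distinguishing number of a graph: the least `r` admitting an `r`-distinguishing
labeling. -/
noncomputable def distinguishingNumber {V : Type*} (G : SimpleGraph V) : ℕ :=
  sInf {r : ℕ | ∃ c : V → Fin r, IsDistinguishing G c}

/-- The jump set `A = {p-1+r·p, p+1+r·p : 0 ≤ r ≤ m-1}` inside `ℤ_{mp}`. -/
def jumpSet (m p : ℕ) : Set (ZMod (m * p)) :=
  {a | ∃ r < m, a = ((p - 1 + r * p : ℕ) : ZMod (m * p)) ∨
                a = ((p + 1 + r * p : ℕ) : ZMod (m * p))}

/-- The circulant graph `C(m,p)` on vertex set `ℤ_{mp}`: `i` and `j` are adjacent iff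
`j - i (mod mp)` lies in the jump set. -/
def circC (m p : ℕ) : SimpleGraph (ZMod (m * p)) :=
  SimpleGraph.circulantGraph (jumpSet m p)

/-- The set `M_i = {i + r·p : 0 ≤ r ≤ m-1}` in `ℤ_{mp}`. -/
def Mset (m p i : ℕ) : Set (ZMod (m * p)) :=
  {v | ∃ r < m, v = ((i + r * p : ℕ) : ZMod (m * p))}

section SameNeighbours

variable {V : Type*} {G : SimpleGraph V} {u v w : V}

theorem edist_le_of_neighborSet_subset (h : G.neighborSet u ⊆ G.neighborSet v) (huw : u ≠ w) :
    G.edist v w ≤ G.edist u w := by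
  refine le_iInf fun W => ?_
  cases W with
  | nil => exact absurd rfl huw
  | cons hadj W => exact SimpleGraph.edist_le (.cons (h hadj) W)

theorem dist_eq_of_neighborSet_eq (h : G.neighborSet u = G.neighborSet v) (huw : u ≠ w)
    (hvw : v ≠ w) : G.dist u w = G.dist v w :=
  congrArg ENat.toNat <| le_antisymm (edist_le_of_neighborSet_subset h.ge hvw)
    (edist_le_of_neighborSet_subset h.le huw)

theorem dist_eq_two_of_neighborSet_eq (h : G.neighborSet u = G.neighborSet v) (huv : u ≠ v)
    (hne : (G.neighborSet u).Nonempty) : G.dist u v = 2 := by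
  have not_adj : ¬ G.Adj u v := fun hadj => G.irrefl (h.subset hadj : G.Adj v v)
  have common : (G.commonNeighbors u v).Nonempty := by
    rwa [SimpleGraph.commonNeighbors, ← h, Set.inter_self]
  exact congrArg ENat.toNat (SimpleGraph.edist_eq_two_iff.2 ⟨huv, not_adj, common⟩)

end SameNeighbours

theorem comap_circulantGraph {A B F : Type*} [AddGroup A] [AddGroup B] [FunLike F A B]
    [AddMonoidHomClass F A B] (f : F) {s : Set B} (hs : 0 ∉ s) :
    (SimpleGraph.circulantGraph s).comap f = SimpleGraph.circulantGraph (f ⁻¹' s) := by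
  ext a b
  have ne_of_sub_mem {x y : B} (hxy : x - y ∈ s) : x ≠ y :=
    sub_ne_zero.1 (ne_of_mem_of_not_mem hxy hs)
  simp only [SimpleGraph.comap_adj, SimpleGraph.circulantGraph_adj, Set.mem_preimage, map_sub]
  refine ⟨fun ⟨hne, h⟩ => ⟨ne_of_apply_ne f hne, h⟩, fun ⟨_, h⟩ => ⟨?_, h⟩⟩
  exact h.elim ne_of_sub_mem fun h' => (ne_of_sub_mem h').symm

/-- Reduction modulo `p`, as a ring homomorphism `ℤ_{mp} → ℤ_p`; its fibres are the sets `M_i`. -/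
def residue (m p : ℕ) : ZMod (m * p) →+* ZMod p :=
  ZMod.castHom (dvd_mul_left p m) (ZMod p)

section Circulant

variable {m p : ℕ}

theorem mem_Mset_iff_residue_eq (hm : 0 < m) {k : ℕ} {v : ZMod (m * p)} :
    v ∈ Mset m p k ↔ residue m p v = k := by
  constructor
  · rintro ⟨r, -, rfl⟩
    simp
  · obtain ⟨x, rfl⟩ := ZMod.intCast_surjective v
    intro hx
    obtain ⟨q, hq⟩ : (p : ℤ) ∣ x - k := by
      rw [← ZMod.intCast_eq_intCast_iff_dvd_sub]
      simpa using hx.symm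
    have r_nonneg : 0 ≤ q % m := Int.emod_nonneg q (by omega)
    have r_lt : q % m < m := Int.emod_lt_of_pos q (by omega)
    refine ⟨(q % m).toNat, by omega, ?_⟩
    rw [← Int.cast_natCast, ZMod.intCast_eq_intCast_iff_dvd_sub]
    push_cast [Int.toNat_of_nonneg r_nonneg]
    exact ⟨-(q / m), by linear_combination -hq + (p : ℤ) * Int.emod_add_mul_ediv q m⟩

theorem jumpSet_eq_union_Mset : jumpSet m p = Mset m p (p - 1) ∪ Mset m p (p + 1) := by
  ext a
  simp only [jumpSet, Mset, Set.mem_union, Set.mem_ofPred_eq, and_or_left, exists_or]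

theorem jumpSet_eq_preimage_residue (hm : 0 < m) (hp : 0 < p) :
    jumpSet m p = residue m p ⁻¹' {-1, 1} := by
  ext a
  simp [jumpSet_eq_union_Mset, mem_Mset_iff_residue_eq hm, Nat.cast_pred hp]

theorem circC_eq_comap_residue (hm : 0 < m) (hp : 1 < p) :
    circC m p = (SimpleGraph.circulantGraph {-1, 1}).comap (residue m p) := by
  have : Fact (1 < p) := ⟨hp⟩
  rw [circC, jumpSet_eq_preimage_residue hm (by omega), comap_circulantGraph _ (by simp)]

theorem neighborSet_circC_eq_of_mem_Mset (hm : 0 < m) (hp : 1 < p) {i : ℕ} {u v : ZMod (m * p)}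
    (hu : u ∈ Mset m p i) (hv : v ∈ Mset m p i) :
    (circC m p).neighborSet u = (circC m p).neighborSet v := by
  rw [mem_Mset_iff_residue_eq hm] at hu hv
  simp only [circC_eq_comap_residue hm hp, SimpleGraph.neighborSet_comap, hu, hv]

theorem circC_adj_add_one (hm : 0 < m) (hp : 1 < p) (u : ZMod (m * p)) :
    (circC m p).Adj u (u + 1) := by
  have : Fact (1 < p) := ⟨hp⟩
  simp [circC_eq_comap_residue hm hp]

end Circulant

theorem stmt_16 (m p : ℕ) (hm : 2 ≤ m) (hp : 2 ≤ p) :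
    (∀ i < p, ∀ u ∈ Mset m p i, ∀ v ∈ Mset m p i, u ≠ v → (circC m p).dist u v = 2) ∧
    (∀ i < p, ∀ u ∈ Mset m p i, ∀ v ∈ Mset m p i, ∀ z ∉ Mset m p i,
      (circC m p).dist u z = (circC m p).dist v z) := by
  have hm' : 0 < m := by omega
  constructor
  · intro i _ u hu v hv huv
    exact dist_eq_two_of_neighborSet_eq (neighborSet_circC_eq_of_mem_Mset hm' hp hu hv) huv
      ⟨u + 1, circC_adj_add_one hm' hp u⟩
  · intro i _ u hu v hv z hz
    exact dist_eq_of_neighborSet_eq (neighborSet_circC_eq_of_mem_Mset hm' hp hu hv)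
      (ne_of_mem_of_not_mem hu hz) (ne_of_mem_of_not_mem hv hz)
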